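/- Asymptotic velocity consensus to the average and asymptotic formation: under the closed-loop dynamics with connected communication graph G, α ∈ (0,1), and realizable desired gaps p*_ij = q_i − q_j, every vehicle's velocity converges as t → ∞ to the average of the initial velocities, i.e. v_i(t) → (1/N)·∑_{j=1}^N v_j(0) for each i, and the spacing errors vanish asymptotically on edges, i.e. p_i(t) − p_j(t) → p*_ij as t → ∞ for all i, j with a_ij = 1. -/

import Mathlib

/-- `sig(x)^α := sign(x) · |x|^α`. -/
noncomputable def sig (x α : ℝ) : ℝ := Real.sign x * |x| ^ α

/-!
In the frame that moves with the average vehicle, the closed loop is a damped mechanical system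
`ẋ = u`, `u̇ = -L_φ x - L_ψ u` with `∑ x = ∑ u = 0`, where `L_φ` is the gradient of a pairwise
potential `V`. The energy `|u|² / 2 + V x` is a Lyapunov function with compact sublevel sets and
derivative `-⟨u, L_ψ u⟩`, which vanishes only at `u = 0`. Since the vector field is merely
continuous, solutions need not be unique, and Barbalat's lemma replaces LaSalle's principle:
applied to the energy it gives `⟨u, L_ψ u⟩ → 0`, hence `u → 0`; applied to `u` it gives `u̇ → 0`,
hence `L_φ x → 0` and `x → 0`.
-/

open Filter Topology
open scoped Matrix

section Barbalat

variable {E : Type*} [NormedAddCommGroup E] [NormedSpace ℝ E] {t₀ : ℝ}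

/-- Barbalat's lemma. -/
lemma tendsto_zero_of_hasDerivAt_of_uniformContinuousOn {f f' : ℝ → E} {L : E}
    (hf : ∀ t, t₀ ≤ t → HasDerivAt f (f' t) t) (hf' : UniformContinuousOn f' (Set.Ici t₀))
    (hL : Tendsto f atTop (𝓝 L)) : Tendsto f' atTop (𝓝 0) := by
  rw [Metric.tendsto_atTop]
  intro ε hε
  obtain ⟨δ, hδ, hclose⟩ := Metric.uniformContinuousOn_iff.1 hf' (ε / 2) (half_pos hε)
  set η := δ / 2 with hη_def
  have hη : 0 < η := half_pos hδ
  have hincr : Tendsto (fun t => f (t + η) - f t) atTop (𝓝 0) := by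
    simpa using (hL.comp (tendsto_atTop_add_const_right atTop η tendsto_id)).sub hL
  obtain ⟨T, hT⟩ := Metric.tendsto_atTop.1 hincr (η * (ε / 2)) (by positivity)
  refine ⟨max T t₀, fun t ht => ?_⟩
  have ht₀ : t₀ ≤ t := (le_max_right _ _).trans ht
  have hsmall : ‖f (t + η) - f t‖ < η * (ε / 2) := by
    simpa using hT t ((le_max_left _ _).trans ht)
  have htaylor : ‖f (t + η) - f t - η • f' t‖ ≤ ε / 2 * η := by
    have hmvt := (convex_Icc t (t + η)).norm_image_sub_le_of_norm_hasDerivWithin_le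
      (f := fun s => f s - s • f' t) (f' := fun s => f' s - f' t) (C := ε / 2)
      (fun s hs => by
        simpa using ((hf s (ht₀.trans hs.1)).fun_sub
          ((hasDerivAt_id s).smul_const (f' t))).hasDerivWithinAt)
      (fun s hs => by
        rw [← dist_eq_norm]
        refine (hclose s (ht₀.trans hs.1) t ht₀ ?_).le
        rw [Real.dist_eq, abs_lt]
        constructor <;> linarith [hs.1, hs.2])
      (Set.left_mem_Icc.2 (by linarith)) (Set.right_mem_Icc.2 (by linarith))
    rw [add_sub_cancel_left, Real.norm_of_nonneg hη.le] at hmvt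
    convert hmvt using 2
    module
  have hscaled : η * ‖f' t‖ < η * ε :=
    calc η * ‖f' t‖ = ‖η • f' t‖ := by rw [norm_smul, Real.norm_of_nonneg hη.le]
      _ ≤ ‖f (t + η) - f t‖ + ‖f (t + η) - f t - η • f' t‖ := norm_le_norm_add_norm_sub _ _
      _ < η * (ε / 2) + ε / 2 * η := add_lt_add_of_lt_of_le hsmall htaylor
      _ = η * ε := by ring
  rw [dist_zero_right]
  exact lt_of_mul_lt_mul_left hscaled hη.le

lemma uniformContinuousOn_comp_of_hasDerivAt_of_isCompact {K : Set E} (hK : IsCompact K)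
    {F : E → E} (hF : ContinuousOn F K) {z : ℝ → E}
    (hz : ∀ t, t₀ ≤ t → HasDerivAt z (F (z t)) t) (hzK : ∀ t, t₀ ≤ t → z t ∈ K)
    {Y : Type*} [UniformSpace Y] {g : E → Y} (hg : ContinuousOn g K) :
    UniformContinuousOn (fun t => g (z t)) (Set.Ici t₀) := by
  obtain ⟨C, hC⟩ := hK.exists_bound_of_continuousOn hF
  have hlip : LipschitzOnWith C.toNNReal z (Set.Ici t₀) :=
    (convex_Ici t₀).lipschitzOnWith_of_nnnorm_hasDerivWithin_le
      (fun t ht => (hz t ht).hasDerivWithinAt)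
      fun t ht => NNReal.coe_le_coe.1 ((hC _ (hzK t ht)).trans (Real.le_coe_toNNReal C))
  exact (hK.uniformContinuousOn_of_continuous hg).comp hlip.uniformContinuousOn hzK

lemma tendsto_zero_of_hasDerivAt_comp_of_isCompact {E' : Type*} [NormedAddCommGroup E']
    [NormedSpace ℝ E'] {K : Set E} (hK : IsCompact K)
    {F : E → E} (hF : ContinuousOn F K) {z : ℝ → E}
    (hz : ∀ t, t₀ ≤ t → HasDerivAt z (F (z t)) t) (hzK : ∀ t, t₀ ≤ t → z t ∈ K)
    {g : E → E'} (hg : ContinuousOn g K) {h : ℝ → E'}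
    (hh : ∀ t, t₀ ≤ t → HasDerivAt h (g (z t)) t) {L : E'} (hL : Tendsto h atTop (𝓝 L)) :
    Tendsto (fun t => g (z t)) atTop (𝓝 0) :=
  tendsto_zero_of_hasDerivAt_of_uniformContinuousOn hh
    (uniformContinuousOn_comp_of_hasDerivAt_of_isCompact hK hF hz hzK hg) hL

end Barbalat

section Limits

lemma tendsto_of_tendsto_comp_of_isCompact {T X Y : Type*} [TopologicalSpace X]
    [TopologicalSpace Y] [T2Space Y] {l : Filter T} {K : Set X} (hK : IsCompact K) {f : T → X}
    (hfK : ∀ᶠ t in l, f t ∈ K) {g : X → Y} (hg : Continuous g) {x₀ : X} {y : Y}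
    (hgf : Tendsto (fun t => g (f t)) l (𝓝 y)) (hunique : ∀ x ∈ K, g x = y → x = x₀) :
    Tendsto f l (𝓝 x₀) := by
  refine hK.tendsto_nhds_of_unique_mapClusterPt hfK fun x hx hxf => hunique x hx ?_
  have hcluster : MapClusterPt (g x) l (g ∘ f) := hxf.continuousAt_comp hg.continuousAt
  exact eq_of_nhds_neBot (hcluster.clusterPt.mono hgf)

lemma exists_tendsto_atTop_of_antitoneOn_Ici {X Y : Type*} [LinearOrder X]
    [ConditionallyCompleteLinearOrder Y] [TopologicalSpace Y] [OrderTopology Y] {f : X → Y}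
    {t₀ : X} {m : Y} (hf : AntitoneOn f (Set.Ici t₀)) (hm : ∀ t, t₀ ≤ t → m ≤ f t) :
    ∃ L, Tendsto f atTop (𝓝 L) := by
  have hanti : Antitone fun t => f (max t t₀) := fun s t hst =>
    hf (le_max_right s t₀) (le_max_right t t₀) (max_le_max_right t₀ hst)
  have hbdd : BddBelow (Set.range fun t => f (max t t₀)) :=
    ⟨m, Set.forall_mem_range.2 fun t => hm _ (le_max_right t t₀)⟩
  refine ⟨_, (tendsto_atTop_ciInf hanti hbdd).congr' ?_⟩
  filter_upwards [eventually_ge_atTop t₀] with t ht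
  rw [max_eq_left ht]

lemma eq_of_hasDerivAt_zero_of_le {E : Type*} [NormedAddCommGroup E] [NormedSpace ℝ E]
    {f : ℝ → E} {t₀ t : ℝ} (hf : ∀ s, t₀ ≤ s → HasDerivAt f 0 s) (ht : t₀ ≤ t) : f t = f t₀ :=
  constant_of_has_deriv_right_zero (fun s hs => (hf s hs.1).continuousAt.continuousWithinAt)
    (fun s hs => (hf s hs.1).hasDerivWithinAt) t ⟨ht, le_rfl⟩

lemma exists_norm_le_of_le_of_tendsto_cobounded {E : Type*} [SeminormedAddGroup E] {f : E → ℝ}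
    (hf : Tendsto f (Bornology.cobounded E) atTop) (M : ℝ) : ∃ C, ∀ x, f x ≤ M → ‖x‖ ≤ C := by
  obtain ⟨C, -, hC⟩ := hasBasis_cobounded_norm.eventually_iff.1 (hf.eventually_gt_atTop M)
  exact ⟨C, fun x hx => le_of_not_ge fun hCx => (hC hCx).not_ge hx⟩

end Limits

/-- A coupling law between two agents: a continuous odd function of their displacement with the
sign of the displacement, so that subtracting it pulls the agents together. -/
structure IsCouplingLaw (φ : ℝ → ℝ) : Prop where
  continuous : Continuous φ
  odd : φ.Odd
  mul_pos : ∀ x, x ≠ 0 → 0 < φ x * x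

/-- The potential energy stored by a coupling law at a given displacement. -/
noncomputable def couplingPotential (φ : ℝ → ℝ) (x : ℝ) : ℝ := ∫ s in (0 : ℝ)..x, φ s

namespace IsCouplingLaw

variable {φ : ℝ → ℝ}

lemma mul_nonneg (hφ : IsCouplingLaw φ) (x : ℝ) : 0 ≤ φ x * x := by
  rcases eq_or_ne x 0 with rfl | hx
  · rw [mul_zero]
  · exact (hφ.mul_pos x hx).le

lemma nonneg_of_nonneg (hφ : IsCouplingLaw φ) {x : ℝ} (hx : 0 ≤ x) : 0 ≤ φ x := by
  rcases hx.eq_or_lt with rfl | hx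
  · exact hφ.odd.map_zero.ge
  · exact (pos_of_mul_pos_left (hφ.mul_pos x hx.ne') hx.le).le

lemma couplingPotential_nonneg (hφ : IsCouplingLaw φ) (x : ℝ) : 0 ≤ couplingPotential φ x := by
  rcases le_total 0 x with hx | hx
  · refine intervalIntegral.integral_nonneg hx fun s hs => ?_
    exact hφ.nonneg_of_nonneg hs.1
  · rw [couplingPotential, intervalIntegral.integral_symm, ← intervalIntegral.integral_neg]
    refine intervalIntegral.integral_nonneg hx fun s hs => ?_
    rw [← hφ.odd.eq]
    exact hφ.nonneg_of_nonneg (neg_nonneg.2 hs.2)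

end IsCouplingLaw

lemma hasDerivAt_couplingPotential {φ : ℝ → ℝ} (hφ : Continuous φ) (x : ℝ) :
    HasDerivAt (couplingPotential φ) (φ x) x :=
  (hφ.integral_hasStrictDerivAt 0 x).hasDerivAt

section Network

variable {ι : Type*}

/-- Coupling weights of a connected undirected network: symmetric, nonnegative, and such that any
two agents are joined by a chain of positive weights. -/
structure IsConnectedWeight (a : ι → ι → ℝ) : Prop where
  symm : ∀ i j, a i j = a j i
  nonneg : ∀ i j, 0 ≤ a i j
  connected : ∀ i j, Relation.ReflTransGen (fun k l => 0 < a k l) i j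

variable [Fintype ι]

/-- The nonlinear graph Laplacian: the net coupling exerted on each agent by the others. For
`φ = id` it is the weighted graph Laplacian. -/
def nonlinearLaplacian (a : ι → ι → ℝ) (φ : ℝ → ℝ) (x : ι → ℝ) : ι → ℝ :=
  fun i => ∑ j, a i j * φ (x i - x j)

/-- The total potential energy of a configuration. The factor `1 / 2` compensates for each
unordered pair being counted twice. -/
noncomputable def networkPotential (a : ι → ι → ℝ) (φ : ℝ → ℝ) (x : ι → ℝ) : ℝ :=
  1 / 2 * ∑ i, ∑ j, a i j * couplingPotential φ (x i - x j)

variable {a : ι → ι → ℝ} {φ ψ : ℝ → ℝ}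

@[fun_prop]
lemma continuous_nonlinearLaplacian (hφ : Continuous φ) :
    Continuous (nonlinearLaplacian a φ) := by
  unfold nonlinearLaplacian
  fun_prop

lemma nonlinearLaplacian_zero (hφ : φ 0 = 0) : nonlinearLaplacian a φ 0 = 0 := by
  funext i
  simp [nonlinearLaplacian, hφ]

lemma continuous_networkPotential (hφ : Continuous φ) : Continuous (networkPotential a φ) := by
  have hpotential : Continuous (couplingPotential φ) :=
    continuous_iff_continuousAt.2 fun x => (hasDerivAt_couplingPotential hφ x).continuousAt
  unfold networkPotential
  fun_prop

lemma dotProduct_nonlinearLaplacian (ha : ∀ i j, a i j = a j i) (hφ : φ.Odd) (w x : ι → ℝ) :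
    w ⬝ᵥ nonlinearLaplacian a φ x
      = 1 / 2 * ∑ i, ∑ j, a i j * (φ (x i - x j) * (w i - w j)) := by
  have hfst : w ⬝ᵥ nonlinearLaplacian a φ x = ∑ i, ∑ j, a i j * φ (x i - x j) * w i := by
    simp only [dotProduct, nonlinearLaplacian, Finset.mul_sum, mul_comm]
  have hsnd : w ⬝ᵥ nonlinearLaplacian a φ x = -∑ i, ∑ j, a i j * φ (x i - x j) * w j := by
    rw [hfst, Finset.sum_comm]
    simp only [← Finset.sum_neg_distrib]
    refine Finset.sum_congr rfl fun i _ => Finset.sum_congr rfl fun j _ => ?_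
    rw [ha j i, ← neg_sub (x i) (x j), hφ.eq]
    ring
  have hsplit : ∑ i, ∑ j, a i j * (φ (x i - x j) * (w i - w j))
      = ∑ i, ∑ j, a i j * φ (x i - x j) * w i - ∑ i, ∑ j, a i j * φ (x i - x j) * w j := by
    simp only [mul_sub, Finset.sum_sub_distrib, mul_assoc]
  linarith

lemma sum_nonlinearLaplacian (ha : ∀ i j, a i j = a j i) (hφ : φ.Odd) (x : ι → ℝ) :
    ∑ i, nonlinearLaplacian a φ x i = 0 := by
  simpa [one_dotProduct] using dotProduct_nonlinearLaplacian ha hφ 1 x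

lemma dotProduct_nonlinearLaplacian_self_nonneg (hsymm : ∀ i j, a i j = a j i)
    (hnonneg : ∀ i j, 0 ≤ a i j) (hφ : IsCouplingLaw φ) (x : ι → ℝ) :
    0 ≤ x ⬝ᵥ nonlinearLaplacian a φ x := by
  rw [dotProduct_nonlinearLaplacian hsymm hφ.odd]
  exact mul_nonneg one_half_pos.le <| Finset.sum_nonneg fun i _ => Finset.sum_nonneg fun j _ =>
    mul_nonneg (hnonneg i j) (hφ.mul_nonneg _)

lemma eq_of_dotProduct_nonlinearLaplacian_self_eq_zero (ha : IsConnectedWeight a)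
    (hφ : IsCouplingLaw φ) {x : ι → ℝ} (hx : x ⬝ᵥ nonlinearLaplacian a φ x = 0) (i j : ι) :
    x i = x j := by
  have hterm (k l) : 0 ≤ a k l * (φ (x k - x l) * (x k - x l)) :=
    mul_nonneg (ha.nonneg k l) (hφ.mul_nonneg _)
  have hterm_zero (k l) : a k l * (φ (x k - x l) * (x k - x l)) = 0 := by
    rw [dotProduct_nonlinearLaplacian ha.symm hφ.odd, mul_eq_zero_iff_left one_half_pos.ne',
      Fintype.sum_eq_zero_iff_of_nonneg fun k => Finset.sum_nonneg fun l _ => hterm k l] at hx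
    exact congrFun ((Fintype.sum_eq_zero_iff_of_nonneg (hterm k)).1 (congrFun hx k)) l
  have hneighbor {k l} (hkl : 0 < a k l) : x k = x l := by
    by_contra hne
    exact (mul_pos hkl (hφ.mul_pos _ (sub_ne_zero.2 hne))).ne' (hterm_zero k l)
  induction ha.connected i j with
  | refl => rfl
  | tail _ hkl ih => exact ih.trans (hneighbor hkl)

lemma eq_zero_of_dotProduct_nonlinearLaplacian_self_eq_zero (ha : IsConnectedWeight a)
    (hφ : IsCouplingLaw φ) {x : ι → ℝ} (hsum : ∑ i, x i = 0)
    (hx : x ⬝ᵥ nonlinearLaplacian a φ x = 0) : x = 0 := by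
  funext i
  have : Nonempty ι := ⟨i⟩
  have hconst : ∑ j, x j = Fintype.card ι * x i := by
    simp [eq_of_dotProduct_nonlinearLaplacian_self_eq_zero ha hφ hx _ i]
  simpa [hsum] using hconst

lemma hasDerivAt_networkPotential (ha : ∀ i j, a i j = a j i) (hφ : Continuous φ) (hodd : φ.Odd)
    {x : ℝ → ι → ℝ} {x' : ι → ℝ} {t : ℝ} (hx : HasDerivAt x x' t) :
    HasDerivAt (fun s => networkPotential a φ (x s)) (x' ⬝ᵥ nonlinearLaplacian a φ (x t)) t := by
  rw [dotProduct_nonlinearLaplacian ha hodd]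
  have hxi := hasDerivAt_pi.1 hx
  exact (HasDerivAt.fun_sum fun i _ => HasDerivAt.fun_sum fun j _ =>
    ((hasDerivAt_couplingPotential hφ _).comp t
      ((hxi i).sub (hxi j))).const_mul (a i j)).const_mul (1 / 2)

lemma networkPotential_nonneg (ha : ∀ i j, 0 ≤ a i j) (hφ : IsCouplingLaw φ) (x : ι → ℝ) :
    0 ≤ networkPotential a φ x :=
  mul_nonneg one_half_pos.le <| Finset.sum_nonneg fun i _ => Finset.sum_nonneg fun j _ =>
    mul_nonneg (ha i j) (hφ.couplingPotential_nonneg _)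

lemma mul_couplingPotential_le_networkPotential (ha : ∀ i j, 0 ≤ a i j) (hφ : IsCouplingLaw φ)
    (x : ι → ℝ) (i j : ι) :
    a i j * couplingPotential φ (x i - x j) ≤ 2 * networkPotential a φ x := by
  have hterm (k l) : 0 ≤ a k l * couplingPotential φ (x k - x l) :=
    mul_nonneg (ha k l) (hφ.couplingPotential_nonneg _)
  calc a i j * couplingPotential φ (x i - x j)
      ≤ ∑ l, a i l * couplingPotential φ (x i - x l) :=
        Finset.single_le_sum (f := fun l => a i l * couplingPotential φ (x i - x l))
          (fun l _ => hterm i l) (Finset.mem_univ j)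
    _ ≤ ∑ k, ∑ l, a k l * couplingPotential φ (x k - x l) :=
        Finset.single_le_sum (f := fun k => ∑ l, a k l * couplingPotential φ (x k - x l))
          (fun k _ => Finset.sum_nonneg fun l _ => hterm k l) (Finset.mem_univ i)
    _ = 2 * networkPotential a φ x := by
        unfold networkPotential
        ring

lemma exists_abs_sub_le_of_networkPotential_le (ha : IsConnectedWeight a) (hφ : IsCouplingLaw φ)
    (hcoercive : Tendsto (couplingPotential φ) (Bornology.cobounded ℝ) atTop) (M : ℝ) (i j : ι) :
    ∃ C, ∀ x, networkPotential a φ x ≤ M → |x i - x j| ≤ C := by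
  induction ha.connected i j with
  | refl => exact ⟨0, fun x _ => by simp⟩
  | @tail k l _ hkl ih =>
    obtain ⟨C, hC⟩ := ih
    obtain ⟨D, hD⟩ := exists_norm_le_of_le_of_tendsto_cobounded hcoercive (2 * M / a k l)
    refine ⟨C + D, fun x hx => (abs_sub_le _ (x k) _).trans (add_le_add (hC x hx) (hD _ ?_))⟩
    rw [le_div_iff₀' hkl]
    exact (mul_couplingPotential_le_networkPotential ha.nonneg hφ x k l).trans (by linarith)

lemma abs_le_sum_abs_sub_of_sum_eq_zero {x : ι → ℝ} (hx : ∑ j, x j = 0) (i : ι) :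
    |x i| ≤ ∑ j, |x i - x j| := by
  have : Nonempty ι := ⟨i⟩
  have hcard : (1 : ℝ) ≤ Fintype.card ι := Nat.one_le_cast.2 Fintype.card_pos
  calc |x i| ≤ Fintype.card ι * |x i| := le_mul_of_one_le_left (abs_nonneg _) hcard
    _ = |∑ j, (x i - x j)| := by simp [hx, abs_mul]
    _ ≤ ∑ j, |x i - x j| := Finset.abs_sum_le_sum_abs _ _

lemma isBounded_setOf_networkPotential_le (ha : IsConnectedWeight a) (hφ : IsCouplingLaw φ)
    (hcoercive : Tendsto (couplingPotential φ) (Bornology.cobounded ℝ) atTop) (M : ℝ) :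
    Bornology.IsBounded {x : ι → ℝ | ∑ i, x i = 0 ∧ networkPotential a φ x ≤ M} := by
  choose C hC using exists_abs_sub_le_of_networkPotential_le ha hφ hcoercive M
  refine Bornology.forall_isBounded_image_eval_iff.1 fun i => ?_
  refine isBounded_iff_forall_norm_le.2 ⟨∑ j, C i j, ?_⟩
  rintro _ ⟨x, ⟨hsum, hx⟩, rfl⟩
  exact (abs_le_sum_abs_sub_of_sum_eq_zero hsum i).trans
    (Finset.sum_le_sum fun j _ => hC i j x hx)

end Network

section Dynamics

variable {ι : Type*} [Fintype ι]

/-- The vector field of the second-order consensus protocol on states `(x, u)` of positions and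
velocities: `φ` couples positions and `ψ` couples velocities. -/
def consensusField (a : ι → ι → ℝ) (φ ψ : ℝ → ℝ) (z : (ι → ℝ) × (ι → ℝ)) :
    (ι → ℝ) × (ι → ℝ) :=
  (z.2, -nonlinearLaplacian a φ z.1 - nonlinearLaplacian a ψ z.2)

/-- The kinetic plus potential energy of a state `(x, u)`: the Lyapunov function of the
protocol. -/
noncomputable def consensusEnergy (a : ι → ι → ℝ) (φ : ℝ → ℝ) (z : (ι → ℝ) × (ι → ℝ)) : ℝ :=
  1 / 2 * (z.2 ⬝ᵥ z.2) + networkPotential a φ z.1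

/-- The states of energy at most `M` whose centre of mass is at rest at the origin. -/
def centeredSublevel (a : ι → ι → ℝ) (φ : ℝ → ℝ) (M : ℝ) : Set ((ι → ℝ) × (ι → ℝ)) :=
  {z | ∑ i, z.1 i = 0 ∧ ∑ i, z.2 i = 0 ∧ consensusEnergy a φ z ≤ M}

variable {a : ι → ι → ℝ} {φ ψ : ℝ → ℝ}

lemma continuous_consensusField (hφ : Continuous φ) (hψ : Continuous ψ) :
    Continuous (consensusField a φ ψ) := by
  unfold consensusField
  fun_prop

lemma isBounded_setOf_dotProduct_self_le (M : ℝ) :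
    Bornology.IsBounded {u : ι → ℝ | u ⬝ᵥ u ≤ M} := by
  refine Bornology.forall_isBounded_image_eval_iff.1 fun i => ?_
  refine isBounded_iff_forall_norm_le.2 ⟨√M, ?_⟩
  rintro _ ⟨u, hu, rfl⟩
  have hcoord : u i ^ 2 ≤ u ⬝ᵥ u := by
    rw [sq]
    exact Finset.single_le_sum (f := fun j => u j * u j) (fun j _ => mul_self_nonneg _)
      (Finset.mem_univ i)
  exact Real.abs_le_sqrt (hcoord.trans hu)

lemma isCompact_centeredSublevel (ha : IsConnectedWeight a) (hφ : IsCouplingLaw φ)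
    (hcoercive : Tendsto (couplingPotential φ) (Bornology.cobounded ℝ) atTop) (M : ℝ) :
    IsCompact (centeredSublevel a φ M) := by
  have hclosed : IsClosed (centeredSublevel a φ M) := by
    have hV := continuous_networkPotential (a := a) hφ.continuous
    have hE : Continuous (consensusEnergy a φ) := by
      unfold consensusEnergy
      exact (continuous_const.mul (continuous_snd.dotProduct continuous_snd)).add
        (hV.comp continuous_fst)
    exact (isClosed_eq (by fun_prop) continuous_const).inter
      ((isClosed_eq (by fun_prop) continuous_const).inter (isClosed_le hE continuous_const))
  refine Metric.isCompact_of_isClosed_isBounded hclosed <|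
    ((isBounded_setOf_networkPotential_le ha hφ hcoercive M).prod
      (isBounded_setOf_dotProduct_self_le (2 * M))).subset ?_
  rintro ⟨x, u⟩ ⟨hx, -, hE⟩
  have hkin : 0 ≤ u ⬝ᵥ u := Finset.sum_nonneg fun i _ => mul_self_nonneg _
  have hpot := networkPotential_nonneg ha.nonneg hφ x
  simp only [consensusEnergy] at hE
  exact ⟨⟨hx, by linarith⟩, show u ⬝ᵥ u ≤ 2 * M by linarith⟩

namespace consensusField

variable {z : ℝ → (ι → ℝ) × (ι → ℝ)}

lemma hasDerivAt_energy (ha : ∀ i j, a i j = a j i) (hφ : Continuous φ) (hodd : φ.Odd)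
    {t : ℝ} (hz : HasDerivAt z (consensusField a φ ψ (z t)) t) :
    HasDerivAt (fun s => consensusEnergy a φ (z s))
      (-((z t).2 ⬝ᵥ nonlinearLaplacian a ψ (z t).2)) t := by
  have hu := hasDerivAt_pi.1 hz.snd
  have hkin : HasDerivAt (fun s => 1 / 2 * ((z s).2 ⬝ᵥ (z s).2))
      ((z t).2 ⬝ᵥ (consensusField a φ ψ (z t)).2) t := by
    refine ((HasDerivAt.fun_sum fun i _ => (hu i).mul (hu i)).const_mul (1 / 2)).congr_deriv ?_
    rw [dotProduct, Finset.mul_sum]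
    exact Finset.sum_congr rfl fun i _ => by ring
  refine (hkin.add (hasDerivAt_networkPotential ha hφ hodd hz.fst)).congr_deriv ?_
  simp only [consensusField, dotProduct_sub, dotProduct_neg]
  ring

lemma antitoneOn_energy (hsymm : ∀ i j, a i j = a j i) (hnonneg : ∀ i j, 0 ≤ a i j)
    (hφ : Continuous φ) (hodd : φ.Odd) (hψ : IsCouplingLaw ψ)
    (hz : ∀ t, 0 ≤ t → HasDerivAt z (consensusField a φ ψ (z t)) t) :
    AntitoneOn (fun t => consensusEnergy a φ (z t)) (Set.Ici 0) := by
  have hE (t : ℝ) (ht : 0 ≤ t) := hasDerivAt_energy hsymm hφ hodd (hz t ht)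
  refine antitoneOn_of_hasDerivWithinAt_nonpos (convex_Ici 0)
    (fun t ht => (hE t ht).continuousAt.continuousWithinAt)
    (fun t ht => (hE t (interior_subset ht)).hasDerivWithinAt) fun t _ => ?_
  exact neg_nonpos.2 (dotProduct_nonlinearLaplacian_self_nonneg hsymm hnonneg hψ _)

lemma sum_velocity_eq (ha : ∀ i j, a i j = a j i) (hφ : φ.Odd) (hψ : ψ.Odd)
    (hz : ∀ t, 0 ≤ t → HasDerivAt z (consensusField a φ ψ (z t)) t) {t : ℝ} (ht : 0 ≤ t) :
    ∑ i, (z t).2 i = ∑ i, (z 0).2 i := by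
  refine eq_of_hasDerivAt_zero_of_le (f := fun s => ∑ i, (z s).2 i) (fun s hs => ?_) ht
  refine (HasDerivAt.fun_sum fun i _ => hasDerivAt_pi.1 (hz s hs).snd i).congr_deriv ?_
  simp [consensusField, sum_nonlinearLaplacian ha hφ, sum_nonlinearLaplacian ha hψ]

lemma sum_position_eq (ha : ∀ i j, a i j = a j i) (hφ : φ.Odd) (hψ : ψ.Odd)
    (hz : ∀ t, 0 ≤ t → HasDerivAt z (consensusField a φ ψ (z t)) t)
    (hu₀ : ∑ i, (z 0).2 i = 0) {t : ℝ} (ht : 0 ≤ t) :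
    ∑ i, (z t).1 i = ∑ i, (z 0).1 i := by
  refine eq_of_hasDerivAt_zero_of_le (f := fun s => ∑ i, (z s).1 i) (fun s hs => ?_) ht
  refine (HasDerivAt.fun_sum fun i _ => hasDerivAt_pi.1 (hz s hs).fst i).congr_deriv ?_
  exact (sum_velocity_eq ha hφ hψ hz hs).trans hu₀

lemma mem_centeredSublevel (hsymm : ∀ i j, a i j = a j i) (hnonneg : ∀ i j, 0 ≤ a i j)
    (hφ : Continuous φ) (hodd : φ.Odd) (hψ : IsCouplingLaw ψ)
    (hz : ∀ t, 0 ≤ t → HasDerivAt z (consensusField a φ ψ (z t)) t)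
    (hx₀ : ∑ i, (z 0).1 i = 0) (hu₀ : ∑ i, (z 0).2 i = 0) {t : ℝ} (ht : 0 ≤ t) :
    z t ∈ centeredSublevel a φ (consensusEnergy a φ (z 0)) :=
  ⟨(sum_position_eq hsymm hodd hψ.odd hz hu₀ ht).trans hx₀,
    (sum_velocity_eq hsymm hodd hψ.odd hz ht).trans hu₀,
    antitoneOn_energy hsymm hnonneg hφ hodd hψ hz Set.self_mem_Ici ht ht⟩

lemma tendsto_velocity_zero (ha : IsConnectedWeight a) (hφ : IsCouplingLaw φ)
    (hψ : IsCouplingLaw ψ)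
    (hcoercive : Tendsto (couplingPotential φ) (Bornology.cobounded ℝ) atTop)
    (hz : ∀ t, 0 ≤ t → HasDerivAt z (consensusField a φ ψ (z t)) t)
    (hx₀ : ∑ i, (z 0).1 i = 0) (hu₀ : ∑ i, (z 0).2 i = 0) :
    Tendsto (fun t => (z t).2) atTop (𝓝 0) := by
  have hK := isCompact_centeredSublevel ha hφ hcoercive (consensusEnergy a φ (z 0))
  have hzK (t : ℝ) (ht : 0 ≤ t) :=
    mem_centeredSublevel ha.symm ha.nonneg hφ.continuous hφ.odd hψ hz hx₀ hu₀ ht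
  obtain ⟨L, hL⟩ : ∃ L, Tendsto (fun t => consensusEnergy a φ (z t)) atTop (𝓝 L) := by
    refine exists_tendsto_atTop_of_antitoneOn_Ici (m := 0)
      (antitoneOn_energy ha.symm ha.nonneg hφ.continuous hφ.odd hψ hz) fun t _ => ?_
    exact add_nonneg (mul_nonneg one_half_pos.le (Finset.sum_nonneg fun i _ => mul_self_nonneg _))
      (networkPotential_nonneg ha.nonneg hφ _)
  have hdissipation_cont : Continuous fun u : ι → ℝ => u ⬝ᵥ nonlinearLaplacian a ψ u :=
    continuous_id.dotProduct (continuous_nonlinearLaplacian hψ.continuous)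
  have hdissipation :
      Tendsto (fun t => -((z t).2 ⬝ᵥ nonlinearLaplacian a ψ (z t).2)) atTop (𝓝 0) :=
    tendsto_zero_of_hasDerivAt_comp_of_isCompact hK
      (continuous_consensusField hφ.continuous hψ.continuous).continuousOn hz hzK
      (hdissipation_cont.comp continuous_snd).neg.continuousOn
      (fun t ht => hasDerivAt_energy ha.symm hφ.continuous hφ.odd (hz t ht)) hL
  refine tendsto_of_tendsto_comp_of_isCompact (hK.image continuous_snd)
    ((eventually_ge_atTop 0).mono fun t ht => Set.mem_image_of_mem _ (hzK t ht))
    hdissipation_cont (by simpa using hdissipation.neg) ?_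
  rintro _ ⟨w, hw, rfl⟩ hzero
  exact eq_zero_of_dotProduct_nonlinearLaplacian_self_eq_zero ha hψ hw.2.1 hzero

lemma tendsto_position_zero (ha : IsConnectedWeight a) (hφ : IsCouplingLaw φ)
    (hψ : IsCouplingLaw ψ)
    (hcoercive : Tendsto (couplingPotential φ) (Bornology.cobounded ℝ) atTop)
    (hz : ∀ t, 0 ≤ t → HasDerivAt z (consensusField a φ ψ (z t)) t)
    (hx₀ : ∑ i, (z 0).1 i = 0) (hu₀ : ∑ i, (z 0).2 i = 0) :
    Tendsto (fun t => (z t).1) atTop (𝓝 0) := by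
  have hK := isCompact_centeredSublevel ha hφ hcoercive (consensusEnergy a φ (z 0))
  have hzK (t : ℝ) (ht : 0 ≤ t) :=
    mem_centeredSublevel ha.symm ha.nonneg hφ.continuous hφ.odd hψ hz hx₀ hu₀ ht
  have hF := continuous_consensusField (a := a) hφ.continuous hψ.continuous
  have hu := tendsto_velocity_zero ha hφ hψ hcoercive hz hx₀ hu₀
  have hacceleration : Tendsto (fun t => (consensusField a φ ψ (z t)).2) atTop (𝓝 0) :=
    tendsto_zero_of_hasDerivAt_comp_of_isCompact hK hF.continuousOn hz hzK
      hF.snd.continuousOn (fun t ht => (hz t ht).snd) hu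
  have hdamping : Tendsto (fun t => nonlinearLaplacian a ψ (z t).2) atTop (𝓝 0) := by
    rw [← nonlinearLaplacian_zero (a := a) hψ.odd.map_zero]
    exact ((continuous_nonlinearLaplacian hψ.continuous).tendsto 0).comp hu
  have hforce : Tendsto (fun t => nonlinearLaplacian a φ (z t).1) atTop (𝓝 0) := by
    simpa [consensusField] using (hacceleration.add hdamping).neg
  refine tendsto_of_tendsto_comp_of_isCompact (hK.image continuous_fst)
    ((eventually_ge_atTop 0).mono fun t ht => Set.mem_image_of_mem _ (hzK t ht))
    (continuous_nonlinearLaplacian hφ.continuous) hforce ?_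
  rintro _ ⟨w, hw, rfl⟩ hzero
  refine eq_zero_of_dotProduct_nonlinearLaplacian_self_eq_zero ha hφ hw.1 ?_
  rw [hzero, dotProduct_zero]

end consensusField

lemma hasDerivAt_centered {q : ι → ℝ} {p v : ι → ℝ → ℝ} {t : ℝ}
    (hp : ∀ i, HasDerivAt (p i) (v i t) t)
    (hv : ∀ i, HasDerivAt (v i)
      (-(∑ j, a i j * φ (p i t - p j t - (q i - q j))) - ∑ j, a i j * ψ (v i t - v j t)) t)
    (c w : ℝ) :
    HasDerivAt (fun s => ((fun i => p i s - q i - c - s * w, fun i => v i s - w) :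
        (ι → ℝ) × (ι → ℝ)))
      (consensusField a φ ψ (fun i => p i t - q i - c - t * w, fun i => v i t - w)) t := by
  have hshift (i j : ι) : p i t - q i - c - t * w - (p j t - q j - c - t * w)
      = p i t - p j t - (q i - q j) := by ring
  refine (hasDerivAt_pi.2 fun i => ?_).prodMk (hasDerivAt_pi.2 fun i => ?_)
  · simpa using (((hp i).sub_const (q i)).sub_const c).fun_sub ((hasDerivAt_id t).mul_const w)
  · simpa only [Pi.sub_apply, Pi.neg_apply, nonlinearLaplacian, hshift, sub_sub_sub_cancel_right]
      using (hv i).sub_const w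

end Dynamics

lemma sum_sub_mean_eq_zero {ι : Type*} [Fintype ι] (f : ι → ℝ) :
    ∑ i, (f i - 1 / (Fintype.card ι : ℝ) * ∑ j, f j) = 0 := by
  rcases isEmpty_or_nonempty ι with hι | hι
  · exact Finset.sum_of_isEmpty _
  · simp [Finset.sum_sub_distrib]

theorem asymptotic_consensus_and_formation_general {ι : Type*} [Fintype ι] {a : ι → ι → ℝ}
    (ha : IsConnectedWeight a) {φ ψ : ℝ → ℝ} (hφ : IsCouplingLaw φ) (hψ : IsCouplingLaw ψ)
    (hcoercive : Tendsto (couplingPotential φ) (Bornology.cobounded ℝ) atTop)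
    (q : ι → ℝ) (p v : ι → ℝ → ℝ)
    (hdp : ∀ i, ∀ t : ℝ, 0 ≤ t → HasDerivAt (p i) (v i t) t)
    (hdv : ∀ i, ∀ t : ℝ, 0 ≤ t → HasDerivAt (v i)
      (-(∑ j, a i j * φ (p i t - p j t - (q i - q j))) - ∑ j, a i j * ψ (v i t - v j t)) t) :
    (∀ i, Tendsto (v i) atTop (𝓝 (1 / (Fintype.card ι : ℝ) * ∑ j, v j 0))) ∧
    ∀ i j, Tendsto (fun t => p i t - p j t) atTop (𝓝 (q i - q j)) := by
  set c := 1 / (Fintype.card ι : ℝ) * ∑ j, (p j 0 - q j)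
  set w := 1 / (Fintype.card ι : ℝ) * ∑ j, v j 0
  have hz (t : ℝ) (ht : 0 ≤ t) :=
    hasDerivAt_centered (fun i => hdp i t ht) (fun i => hdv i t ht) c w
  have hx₀ : ∑ i, (p i 0 - q i - c - 0 * w) = 0 := by
    simpa only [zero_mul, sub_zero] using sum_sub_mean_eq_zero fun i => p i 0 - q i
  have hu₀ : ∑ i, (v i 0 - w) = 0 := sum_sub_mean_eq_zero fun i => v i 0
  have hx := tendsto_pi_nhds.1 (consensusField.tendsto_position_zero ha hφ hψ hcoercive hz hx₀ hu₀)
  have hu := tendsto_pi_nhds.1 (consensusField.tendsto_velocity_zero ha hφ hψ hcoercive hz hx₀ hu₀)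
  refine ⟨fun i => by simpa using (hu i).add_const w, fun i j => ?_⟩
  have hgap := ((hx i).sub (hx j)).add_const (q i - q j)
  simp only [Pi.zero_apply, sub_zero, zero_add] at hgap
  exact hgap.congr fun t => by ring

section Sig

variable {γ : ℝ}

lemma sig_mul_self_pos {x : ℝ} (hx : x ≠ 0) : 0 < sig x γ * x := by
  rw [sig, mul_right_comm]
  exact mul_pos (Real.sign_mul_pos_of_ne_zero x hx) (Real.rpow_pos_of_pos (abs_pos.2 hx) γ)

lemma sig_eq_max_rpow_sub_max_neg_rpow (hγ : 0 < γ) (x : ℝ) :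
    sig x γ = max x 0 ^ γ - max (-x) 0 ^ γ := by
  rcases lt_trichotomy x 0 with hx | rfl | hx
  · simp [sig, Real.sign_of_neg hx, abs_of_neg hx, hx.le, Real.zero_rpow hγ.ne']
  · simp [sig]
  · simp [sig, Real.sign_of_pos hx, abs_of_pos hx, hx.le, Real.zero_rpow hγ.ne']

lemma continuous_sig (hγ : 0 < γ) : Continuous fun x => sig x γ := by
  simp only [sig_eq_max_rpow_sub_max_neg_rpow hγ]
  exact ((continuous_id.max continuous_const).rpow_const fun _ => Or.inr hγ.le).sub
    ((continuous_neg.max continuous_const).rpow_const fun _ => Or.inr hγ.le)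

lemma isCouplingLaw_sig (hγ : 0 < γ) : IsCouplingLaw fun x => sig x γ where
  continuous := continuous_sig hγ
  odd x := by simp [sig, Real.sign_neg]
  mul_pos _ hx := sig_mul_self_pos hx

lemma hasDerivAt_abs_rpow_div_sig (hγ : 0 < γ) (x : ℝ) :
    HasDerivAt (fun s : ℝ => |s| ^ (γ + 1) / (γ + 1)) (sig x γ) x := by
  refine ((hasDerivAt_abs_rpow x (by linarith : 1 < γ + 1)).div_const (γ + 1)).congr_deriv ?_
  rcases eq_or_ne x 0 with rfl | hx
  · simp [sig]
  · have hsplit : |x| ^ γ = |x| ^ (γ + 1 - 2) * |x| := by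
      rw [← Real.rpow_add_one (abs_ne_zero.2 hx)]
      ring_nf
    have hsign : Real.sign x * |x| = x := by
      rcases lt_or_gt_of_ne hx with h | h
      · rw [Real.sign_of_neg h, abs_of_neg h, neg_one_mul, neg_neg]
      · rw [Real.sign_of_pos h, abs_of_pos h, one_mul]
    rw [sig, hsplit, mul_left_comm, hsign]
    field_simp

lemma couplingPotential_sig (hγ : 0 < γ) (x : ℝ) :
    couplingPotential (fun s => sig s γ) x = |x| ^ (γ + 1) / (γ + 1) := by
  rw [couplingPotential, intervalIntegral.integral_eq_sub_of_hasDerivAt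
    (fun s _ => hasDerivAt_abs_rpow_div_sig hγ s) ((continuous_sig hγ).intervalIntegrable 0 x)]
  simp [Real.zero_rpow (by positivity : γ + 1 ≠ 0)]

lemma tendsto_couplingPotential_sig (hγ : 0 < γ) :
    Tendsto (couplingPotential fun s => sig s γ) (Bornology.cobounded ℝ) atTop := by
  have hγ' : 0 < γ + 1 := by positivity
  simp only [funext (couplingPotential_sig hγ)]
  exact ((tendsto_rpow_atTop hγ').comp tendsto_norm_cobounded_atTop).atTop_div_const hγ'

end Sig

lemma isConnectedWeight_adj {V : Type*} {G : SimpleGraph V} [DecidableRel G.Adj]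
    (hG : G.Preconnected) : IsConnectedWeight fun i j => if G.Adj i j then (1 : ℝ) else 0 where
  symm i j := by simp only [G.adj_comm]
  nonneg i j := by positivity
  connected i j := by
    refine Relation.ReflTransGen.mono (fun k l hkl => ?_) _ _
      ((SimpleGraph.reachable_iff_reflTransGen i j).1 (hG i j))
    simp only [if_pos hkl, zero_lt_one]

/-- Asymptotic velocity consensus to the average of the initial velocities and
asymptotic achievement of the desired formation on edges. -/
theorem asymptotic_consensus_and_formation
    (N : ℕ) (G : SimpleGraph (Fin N)) [DecidableRel G.Adj] (hconn : G.Connected)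
    (a : Fin N → Fin N → ℝ) (ha : ∀ i j, a i j = if G.Adj i j then 1 else 0)
    (α : ℝ) (hα : α ∈ Set.Ioo (0 : ℝ) 1)
    (q : Fin N → ℝ) (pstar : Fin N → Fin N → ℝ)
    (hps : ∀ i j, pstar i j = q i - q j)
    (p v : Fin N → ℝ → ℝ)
    (hdp : ∀ i, ∀ t : ℝ, 0 ≤ t → HasDerivAt (p i) (v i t) t)
    (hdv : ∀ i, ∀ t : ℝ, 0 ≤ t → HasDerivAt (v i)
      (-(∑ j, a i j * sig (p i t - p j t - pstar i j) (2 * α / (1 + α)))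
        - ∑ j, a i j * sig (v i t - v j t) α) t) :
    (∀ i, Filter.Tendsto (v i) Filter.atTop
        (nhds ((1 / (N : ℝ)) * ∑ j, v j 0))) ∧
    (∀ i j, a i j = 1 → Filter.Tendsto (fun t => p i t - p j t) Filter.atTop
        (nhds (pstar i j))) := by
  have hα₀ : 0 < α := hα.1
  have hβ₀ : 0 < 2 * α / (1 + α) := by positivity
  obtain rfl : a = fun i j => if G.Adj i j then 1 else 0 := funext₂ ha
  simp only [hps] at hdv ⊢
  obtain ⟨hvelocity, hposition⟩ := asymptotic_consensus_and_formation_general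
    (isConnectedWeight_adj hconn.preconnected) (isCouplingLaw_sig hβ₀) (isCouplingLaw_sig hα₀)
    (tendsto_couplingPotential_sig hβ₀) q p v hdp hdv
  exact ⟨by simpa only [Fintype.card_fin] using hvelocity, fun i j _ => hposition i j⟩
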